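/- Let X be an n-dimensional compact Kähler manifold and let γ₁, γ₂ be two Gauduchon (resp. movable, balanced) classes. Then 𝔐(γ₁ + γ₂)^{(n-1)/n} ≥ 𝔐(γ₁)^{(n-1)/n} + 𝔐(γ₂)^{(n-1)/n}. -/

import Mathlib

/-!
Setting: on an `n`-dimensional compact Kähler manifold `X`, `H11` plays the role of
`H^{1,1}_{BC}(X,ℝ)` and `W` plays the role of the space containing the Gauduchon
(resp. movable, balanced) cone `C`; `pair` is the natural duality pairing, `vol` the
volume of pseudo-effective `(1,1)`-classes, and `E` the pseudo-effective cone.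
Classes in `C` pair non-negatively with pseudo-effective classes (`hdual`).
-/

/-- The invariant `𝔐(γ) = inf_{β ∈ E₁} ⟨β,γ⟩^{n/(n-1)}`, where `E₁` is the set of
pseudo-effective `(1,1)`-classes of volume one. -/
noncomputable def MInv {H11 W : Type*} [AddCommGroup H11] [Module ℝ H11]
    [AddCommGroup W] [Module ℝ W]
    (n : ℕ) (pair : H11 →ₗ[ℝ] W →ₗ[ℝ] ℝ) (vol : H11 → ℝ)
    (E : Set H11) (γ : W) : ℝ :=
  sInf {t : ℝ | ∃ β ∈ E, vol β = 1 ∧ t = pair β γ ^ ((n : ℝ) / ((n : ℝ) - 1))}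

/-!
Since `t ↦ t ^ p` is increasing and continuous on `[0, ∞)`, it commutes with infima, so taking the
power `(n-1)/n` of `𝔐(γ)` undoes the exponent inside: `𝔐(γ)^{(n-1)/n} = inf_{β ∈ E₁} ⟨β,γ⟩`.
For each `β`, `⟨β,γ⟩` is additive in `γ`, so this infimum is superadditive.
-/

section RealInfima

variable {ι : Sort*} {f g : ι → ℝ}

theorem real_iInf_rpow (hf : ∀ i, 0 ≤ f i) {p : ℝ} (hp : 0 < p) :
    ⨅ i, f i ^ p = (⨅ i, f i) ^ p := by
  cases isEmpty_or_nonempty ι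
  · rw [Real.iInf_of_isEmpty, Real.iInf_of_isEmpty, Real.zero_rpow hp.ne']
  have hcont : ContinuousWithinAt (· ^ p) (Set.range f) (sInf (Set.range f)) :=
    (Real.continuous_rpow_const hp.le).continuousWithinAt
  have hmono : MonotoneOn (· ^ p) (Set.range f) :=
    (Real.monotoneOn_rpow_Ici_of_exponent_nonneg hp.le).mono (Set.range_subset_iff.2 hf)
  have hbdd : BddBelow (Set.range f) := ⟨0, Set.forall_mem_range.2 hf⟩
  rw [iInf, iInf, hmono.map_csInf_of_continuousWithinAt hcont (Set.range_nonempty f) hbdd,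
    ← Set.range_comp, Function.comp_def]

theorem real_iInf_add_iInf_le_iInf_add (hf : BddBelow (Set.range f))
    (hg : BddBelow (Set.range g)) : (⨅ i, f i) + ⨅ i, g i ≤ ⨅ i, (f i + g i) := by
  cases isEmpty_or_nonempty ι
  · simp only [Real.iInf_of_isEmpty, add_zero, le_refl]
  · exact ciInf_add_ciInf_le_ciInf_add hf hg

end RealInfima

/-- The set `E₁` of classes of volume one in `E`, over which the infimum defining `MInv` is
taken; where it is empty, `MInv` is `sInf ∅ = 0`. -/
def unitVolumeClasses {H11 : Type*} (vol : H11 → ℝ) (E : Set H11) : Set H11 :=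
  {β ∈ E | vol β = 1}

section MInv

variable {H11 W : Type*} [AddCommGroup H11] [Module ℝ H11] [AddCommGroup W] [Module ℝ W]

theorem MInv_eq_iInf (n : ℕ) (pair : H11 →ₗ[ℝ] W →ₗ[ℝ] ℝ) (vol : H11 → ℝ) (E : Set H11)
    (γ : W) :
    MInv n pair vol E γ =
      ⨅ β : unitVolumeClasses vol E, pair β γ ^ ((n : ℝ) / ((n : ℝ) - 1)) := by
  rw [MInv, iInf]
  congr 1
  ext t
  simp only [unitVolumeClasses, Set.mem_ofPred_eq, Set.mem_range, Subtype.exists, exists_prop,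
    and_assoc, eq_comm]

variable {n : ℕ} {pair : H11 →ₗ[ℝ] W →ₗ[ℝ] ℝ} {vol : H11 → ℝ} {E : Set H11}

theorem MInv_rpow_eq_iInf (hn : 2 ≤ n) {γ : W}
    (hγ : ∀ β ∈ unitVolumeClasses vol E, 0 ≤ pair β γ) :
    MInv n pair vol E γ ^ (((n : ℝ) - 1) / n) = ⨅ β : unitVolumeClasses vol E, pair β γ := by
  have hn_one : (1 : ℝ) < n := by exact_mod_cast hn
  have hp : 0 < (n : ℝ) / ((n : ℝ) - 1) := div_pos (by linarith) (by linarith)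
  have hpair : ∀ β : unitVolumeClasses vol E, 0 ≤ pair β γ := fun β ↦ hγ β β.2
  rw [MInv_eq_iInf, real_iInf_rpow hpair hp, ← inv_div (n : ℝ),
    Real.rpow_rpow_inv (Real.iInf_nonneg hpair) hp.ne']

theorem MInv_superadditive_general (hn : 2 ≤ n) {γ₁ γ₂ : W}
    (hγ₁ : ∀ β ∈ unitVolumeClasses vol E, 0 ≤ pair β γ₁)
    (hγ₂ : ∀ β ∈ unitVolumeClasses vol E, 0 ≤ pair β γ₂) :
    MInv n pair vol E γ₁ ^ (((n : ℝ) - 1) / n) + MInv n pair vol E γ₂ ^ (((n : ℝ) - 1) / n)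
      ≤ MInv n pair vol E (γ₁ + γ₂) ^ (((n : ℝ) - 1) / n) := by
  have hadd : ∀ β ∈ unitVolumeClasses vol E, 0 ≤ pair β (γ₁ + γ₂) := fun β hβ ↦ by
    rw [map_add]
    exact add_nonneg (hγ₁ β hβ) (hγ₂ β hβ)
  rw [MInv_rpow_eq_iInf hn hγ₁, MInv_rpow_eq_iInf hn hγ₂, MInv_rpow_eq_iInf hn hadd]
  simp only [map_add]
  exact real_iInf_add_iInf_le_iInf_add ⟨0, Set.forall_mem_range.2 fun β ↦ hγ₁ β β.2⟩
    ⟨0, Set.forall_mem_range.2 fun β ↦ hγ₂ β β.2⟩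

end MInv

/-- For Gauduchon (resp. movable, balanced) classes `γ₁, γ₂` on an
`n`-dimensional compact Kähler manifold,
`𝔐(γ₁ + γ₂)^{(n-1)/n} ≥ 𝔐(γ₁)^{(n-1)/n} + 𝔐(γ₂)^{(n-1)/n}`. -/
theorem MInv_superadditive
    (n : ℕ) (hn : 2 ≤ n)
    (H11 W : Type*) [AddCommGroup H11] [Module ℝ H11]
    [AddCommGroup W] [Module ℝ W]
    (pair : H11 →ₗ[ℝ] W →ₗ[ℝ] ℝ)
    (vol : H11 → ℝ)
    (E : Set H11)      -- the pseudo-effective cone of (1,1)-classes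
    (C : Set W)        -- the Gauduchon (resp. movable, balanced) cone
    (hCadd : ∀ γ₁ ∈ C, ∀ γ₂ ∈ C, γ₁ + γ₂ ∈ C)
    (hCsmul : ∀ c : ℝ, 0 < c → ∀ γ ∈ C, c • γ ∈ C)
    (hvol : ∀ β, 0 ≤ vol β)
    (hdual : ∀ β ∈ E, ∀ γ ∈ C, 0 ≤ pair β γ)
    (γ₁ γ₂ : W) (h₁ : γ₁ ∈ C) (h₂ : γ₂ ∈ C) :
    MInv n pair vol E γ₁ ^ (((n : ℝ) - 1) / n) + MInv n pair vol E γ₂ ^ (((n : ℝ) - 1) / n)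
      ≤ MInv n pair vol E (γ₁ + γ₂) ^ (((n : ℝ) - 1) / n) :=
  MInv_superadditive_general hn (fun β hβ ↦ hdual β hβ.1 γ₁ h₁) (fun β hβ ↦ hdual β hβ.1 γ₂ h₂)
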